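/- arXiv:1810.06234 — 3 statements merged into one kernel-verified Lean document; each statement's English description precedes it below -/
import Mathlib

section
/- Almost surely, τ̂^{(1)}_{1,2|Z=z} + s_n(z) = τ̂^{(2)}_{1,2|Z=z} = τ̂^{(3)}_{1,2|Z=z} − s_n(z), where s_n(z) = Σ_{i=1}^n w_{i,n}(z)². -/
open MeasureTheory ProbabilityTheory Filter Real
open scoped ENNReal NNReal BigOperators

noncomputable section

/-- Rescaled kernel `K_h(u) = h^{-p} K(u/h)`. -/
def kh (p : ℕ) (K : (Fin p → ℝ) → ℝ) (h : ℝ) (u : Fin p → ℝ) : ℝ :=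
  (h ^ p)⁻¹ * K (h⁻¹ • u)

/-- Nadaraya-Watson weights `w_{i,n}(z)`. -/
def nwWeight (p n : ℕ) {Ω : Type*} (K : (Fin p → ℝ) → ℝ) (h : ℝ)
    (Z : Fin n → Ω → (Fin p → ℝ)) (i : Fin n) (z : Fin p → ℝ) (ω : Ω) : ℝ :=
  kh p K h (Z i ω - z) / ∑ j : Fin n, kh p K h (Z j ω - z)

/-- The estimator `τ̂⁽¹⁾_{1,2|Z=z}`. -/
def tauHat1 (p n : ℕ) {Ω : Type*} (K : (Fin p → ℝ) → ℝ) (h : ℝ)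
    (X : Fin n → Ω → ℝ × ℝ) (Z : Fin n → Ω → (Fin p → ℝ)) (z : Fin p → ℝ) (ω : Ω) : ℝ :=
  4 * ∑ i : Fin n, ∑ j : Fin n, nwWeight p n K h Z i z ω * nwWeight p n K h Z j z ω *
    (if (X i ω).1 < (X j ω).1 ∧ (X i ω).2 < (X j ω).2 then (1 : ℝ) else 0) - 1

/-- The estimator `τ̂⁽²⁾_{1,2|Z=z}`. -/
def tauHat2 (p n : ℕ) {Ω : Type*} (K : (Fin p → ℝ) → ℝ) (h : ℝ)
    (X : Fin n → Ω → ℝ × ℝ) (Z : Fin n → Ω → (Fin p → ℝ)) (z : Fin p → ℝ) (ω : Ω) : ℝ :=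
  ∑ i : Fin n, ∑ j : Fin n, nwWeight p n K h Z i z ω * nwWeight p n K h Z j z ω *
    ((if 0 < ((X i ω).1 - (X j ω).1) * ((X i ω).2 - (X j ω).2) then (1 : ℝ) else 0)
      - (if ((X i ω).1 - (X j ω).1) * ((X i ω).2 - (X j ω).2) < 0 then (1 : ℝ) else 0))

/-- The estimator `τ̂⁽³⁾_{1,2|Z=z}`. -/
def tauHat3 (p n : ℕ) {Ω : Type*} (K : (Fin p → ℝ) → ℝ) (h : ℝ)
    (X : Fin n → Ω → ℝ × ℝ) (Z : Fin n → Ω → (Fin p → ℝ)) (z : Fin p → ℝ) (ω : Ω) : ℝ :=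
  1 - 4 * ∑ i : Fin n, ∑ j : Fin n, nwWeight p n K h Z i z ω * nwWeight p n K h Z j z ω *
    (if (X i ω).1 < (X j ω).1 ∧ (X j ω).2 < (X i ω).2 then (1 : ℝ) else 0)

/-- `s_n(z) = Σ_i w_{i,n}(z)²`. -/
def sn (p n : ℕ) {Ω : Type*} (K : (Fin p → ℝ) → ℝ) (h : ℝ)
    (Z : Fin n → Ω → (Fin p → ℝ)) (z : Fin p → ℝ) (ω : Ω) : ℝ :=
  ∑ i : Fin n, (nwWeight p n K h Z i z ω) ^ 2

theorem tau_aux (n : ℕ) (w x y : Fin n → ℝ) (hw : ∑ i, w i = 1)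
    (hne : ∀ i j, i ≠ j → x i ≠ x j ∧ y i ≠ y j) :
    (4 * ∑ i, ∑ j, w i * w j * (if x i < x j ∧ y i < y j then (1 : ℝ) else 0) - 1
        + ∑ i, w i ^ 2
      = ∑ i, ∑ j, w i * w j * ((if 0 < (x i - x j) * (y i - y j) then (1 : ℝ) else 0)
        - (if (x i - x j) * (y i - y j) < 0 then (1 : ℝ) else 0))) := by
  have h1 : (1 : ℝ) = ∑ i, ∑ j, w i * w j := by
    rw [← Finset.sum_mul_sum, hw, one_mul]
  have h2 : ∑ i, w i ^ 2 = ∑ i, ∑ j, w i * w j * (if i = j then (1 : ℝ) else 0) := by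
    simp [sq]
  have h3 : ∑ i, ∑ j, w i * w j * (if x i < x j ∧ y i < y j then (1 : ℝ) else 0)
      = ∑ i, ∑ j, w i * w j * (if x j < x i ∧ y j < y i then (1 : ℝ) else 0) := by
    rw [Finset.sum_comm]
    simp only [mul_comm (w _) (w _)]
  have h4 : ∑ i, ∑ j, w i * w j * ((if 0 < (x i - x j) * (y i - y j) then (1 : ℝ) else 0)
        - (if (x i - x j) * (y i - y j) < 0 then (1 : ℝ) else 0))
      = 2 * ∑ i, ∑ j, w i * w j * (if x i < x j ∧ y i < y j then (1 : ℝ) else 0)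
      + 2 * ∑ i, ∑ j, w i * w j * (if x j < x i ∧ y j < y i then (1 : ℝ) else 0)
      - ∑ i, ∑ j, w i * w j + ∑ i, ∑ j, w i * w j * (if i = j then (1 : ℝ) else 0) := by
    simp only [Finset.mul_sum, ← Finset.sum_add_distrib, ← Finset.sum_sub_distrib]
    refine Finset.sum_congr rfl fun i _ => Finset.sum_congr rfl fun j _ => ?_
    by_cases hij : i = j
    · subst hij
      simp
    · obtain ⟨hx, hy⟩ := hne i j hij
      rcases lt_or_gt_of_ne hx with hx | hx <;> rcases lt_or_gt_of_ne hy with hy | hy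
      · have := mul_pos_of_neg_of_neg (sub_neg.2 hx) (sub_neg.2 hy)
        simp only [this, this.not_gt, hx, hy, hx.not_gt, hij]
        simp; ring
      · have := mul_neg_of_neg_of_pos (sub_neg.2 hx) (sub_pos.2 hy)
        simp only [this, this.not_gt, hx, hy, hx.not_gt, hy.not_gt, hij]
        simp
      · have := mul_neg_of_pos_of_neg (sub_pos.2 hx) (sub_neg.2 hy)
        simp only [this, this.not_gt, hx, hy, hx.not_gt, hy.not_gt, hij]
        simp
      · have := mul_pos (sub_pos.2 hx) (sub_pos.2 hy)
        simp only [this, this.not_gt, hx, hy, hx.not_gt, hij]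
        simp; ring
  rw [h4, ← h3, ← h2, ← h1]
  ring

/-- Proposition 1 of the paper: almost surely,
`τ̂⁽¹⁾ + s_n = τ̂⁽²⁾ = τ̂⁽³⁾ − s_n`. -/
theorem tauHat_relationship
    {Ω : Type*} [MeasurableSpace Ω] (P : Measure Ω) [IsProbabilityMeasure P]
    (p n : ℕ) (hn : 2 ≤ n) (K : (Fin p → ℝ) → ℝ) (h : ℝ) (hh : 0 < h)
    (X : Fin n → Ω → ℝ × ℝ) (Z : Fin n → Ω → (Fin p → ℝ)) (z : Fin p → ℝ)
    -- the sample is i.i.d. from a continuous distribution: ties occur with probability 0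
    (hties : ∀ᵐ ω ∂P, ∀ i j : Fin n, i ≠ j →
      (X i ω).1 ≠ (X j ω).1 ∧ (X i ω).2 ≠ (X j ω).2)
    -- the weights are well-defined: the denominator is positive
    (hden : ∀ᵐ ω ∂P, 0 < ∑ j : Fin n, kh p K h (Z j ω - z)) :
    ∀ᵐ ω ∂P,
      tauHat1 p n K h X Z z ω + sn p n K h Z z ω = tauHat2 p n K h X Z z ω ∧
      tauHat2 p n K h X Z z ω = tauHat3 p n K h X Z z ω - sn p n K h Z z ω := by
  filter_upwards [hties, hden] with ω ht hd
  have hw : ∑ i, nwWeight p n K h Z i z ω = 1 := by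
    simp only [nwWeight]
    rw [← Finset.sum_div, div_self hd.ne']
  have e1 := tau_aux n (fun i => nwWeight p n K h Z i z ω) (fun i => (X i ω).1)
    (fun i => (X i ω).2) hw ht
  have e2 := tau_aux n (fun i => nwWeight p n K h Z i z ω) (fun i => (X i ω).1)
    (fun i => -(X i ω).2) hw (fun i j hij => ⟨(ht i j hij).1, by simpa using (ht i j hij).2⟩)
  refine ⟨e1, ?_⟩
  have e3 : ∀ a b c d : ℝ, (a - b) * (-c - -d) = -((a - b) * (c - d)) := by
    intros; ring
  simp only [e3, neg_lt_neg_iff, Left.neg_pos_iff, Left.neg_neg_iff] at e2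
  have e4 : tauHat2 p n K h X Z z ω = - ∑ i : Fin n, ∑ j : Fin n,
      nwWeight p n K h Z i z ω * nwWeight p n K h Z j z ω *
    ((if ((X i ω).1 - (X j ω).1) * ((X i ω).2 - (X j ω).2) < 0 then (1 : ℝ) else 0)
      - (if 0 < ((X i ω).1 - (X j ω).1) * ((X i ω).2 - (X j ω).2) then (1 : ℝ) else 0)) := by
    simp only [tauHat2, ← Finset.sum_neg_distrib, ← mul_neg, neg_sub]
  rw [e4, ← e2]
  simp only [tauHat3, sn]
  ring
end
end

section
/- Almost surely, τ̂^{(1)}_{1,2|Z=z} takes values in the interval [−1, 1 − 2 s_n(z)], τ̂^{(2)}_{1,2|Z=z} takes values in [−1 + s_n(z), 1 − s_n(z)], and τ̂^{(3)}_{1,2|Z=z} takes values in [−1 + 2 s_n(z), 1], where s_n(z) = Σ_{i=1}^n w_{i,n}(z)². -/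
open MeasureTheory ProbabilityTheory Filter Real
open scoped ENNReal NNReal BigOperators

noncomputable section

theorem aux_bound (n : ℕ) (w : Fin n → ℝ) (hw : ∀ i, 0 ≤ w i) (h1 : ∑ i, w i = 1)
    (f : Fin n → Fin n → ℝ) (c : ℝ) (hf : ∀ i j, f i j + f j i ≤ if i = j then 0 else c) :
    2 * ∑ i, ∑ j, w i * w j * f i j ≤ c * (1 - ∑ i, w i ^ 2) := by
  have e1 : ∑ i, ∑ j, w i * w j * f i j = ∑ i, ∑ j, w i * w j * f j i := by
    rw [Finset.sum_comm]
    refine Finset.sum_congr rfl fun i _ => Finset.sum_congr rfl fun j _ => by ring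
  have e2 : ∑ i, ∑ j, w i * w j * (if i = j then 0 else c) = c * (1 - ∑ i, w i ^ 2) := by
    have : ∀ i j, w i * w j * (if i = j then 0 else c)
        = c * (w i * w j) - (if i = j then c * (w i * w j) else 0) := by
      intro i j
      split_ifs <;> ring
    simp only [this, Finset.sum_sub_distrib, Finset.sum_ite_eq, Finset.mem_univ, if_true,
      ← Finset.mul_sum, h1, mul_one]
    simp only [mul_sub, mul_one, pow_two]
  rw [← e2, two_mul]
  nth_rewrite 2 [e1]
  simp only [← Finset.sum_add_distrib, ← mul_add]
  exact Finset.sum_le_sum fun i _ => Finset.sum_le_sum fun j _ =>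
    mul_le_mul_of_nonneg_left (hf i j) (mul_nonneg (hw i) (hw j))

/-- almost surely, `τ̂⁽¹⁾ ∈ [−1, 1 − 2 s_n]`, `τ̂⁽²⁾ ∈ [−1 + s_n, 1 − s_n]`
and `τ̂⁽³⁾ ∈ [−1 + 2 s_n, 1]`. -/
theorem tauHat_range
    {Ω : Type*} [MeasurableSpace Ω] (P : Measure Ω) [IsProbabilityMeasure P]
    (p n : ℕ) (hn : 2 ≤ n) (K : (Fin p → ℝ) → ℝ) (hKnonneg : ∀ u, 0 ≤ K u)
    (h : ℝ) (hh : 0 < h)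
    (X : Fin n → Ω → ℝ × ℝ) (Z : Fin n → Ω → (Fin p → ℝ)) (z : Fin p → ℝ)
    -- the sample is i.i.d. from a continuous distribution: ties occur with probability 0
    (hties : ∀ᵐ ω ∂P, ∀ i j : Fin n, i ≠ j →
      (X i ω).1 ≠ (X j ω).1 ∧ (X i ω).2 ≠ (X j ω).2)
    -- the weights are well-defined: the denominator is positive
    (hden : ∀ᵐ ω ∂P, 0 < ∑ j : Fin n, kh p K h (Z j ω - z)) :
    ∀ᵐ ω ∂P,
      tauHat1 p n K h X Z z ω ∈ Set.Icc (-1 : ℝ) (1 - 2 * sn p n K h Z z ω) ∧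
      tauHat2 p n K h X Z z ω ∈ Set.Icc (-1 + sn p n K h Z z ω) (1 - sn p n K h Z z ω) ∧
      tauHat3 p n K h X Z z ω ∈ Set.Icc (-1 + 2 * sn p n K h Z z ω) (1 : ℝ) := by
  filter_upwards [hden] with ω hd
  have hk : ∀ u, 0 ≤ kh p K h u := fun u =>
    mul_nonneg (inv_nonneg.2 (pow_nonneg hh.le _)) (hKnonneg _)
  have hw : ∀ i, 0 ≤ nwWeight p n K h Z i z ω := fun i => div_nonneg (hk _) hd.le
  have h1 : ∑ i, nwWeight p n K h Z i z ω = 1 := by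
    simp only [nwWeight, ← Finset.sum_div]
    exact div_self hd.ne'
  have B := aux_bound n _ hw h1
  unfold tauHat1 tauHat2 tauHat3 sn
  refine ⟨⟨?_, ?_⟩, ⟨?_, ?_⟩, ⟨?_, ?_⟩⟩
  · have : 0 ≤ ∑ i : Fin n, ∑ j : Fin n, nwWeight p n K h Z i z ω * nwWeight p n K h Z j z ω *
        (if (X i ω).1 < (X j ω).1 ∧ (X i ω).2 < (X j ω).2 then (1 : ℝ) else 0) :=
      Finset.sum_nonneg fun i _ => Finset.sum_nonneg fun j _ =>
        mul_nonneg (mul_nonneg (hw i) (hw j)) (by split_ifs <;> norm_num)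
    linarith
  · have := B (fun i j => if (X i ω).1 < (X j ω).1 ∧ (X i ω).2 < (X j ω).2 then (1 : ℝ) else 0) 1
      (by intro i j; grind)
    linarith
  · have := B (fun i j => -((if 0 < ((X i ω).1 - (X j ω).1) * ((X i ω).2 - (X j ω).2) then (1 : ℝ) else 0)
      - (if ((X i ω).1 - (X j ω).1) * ((X i ω).2 - (X j ω).2) < 0 then (1 : ℝ) else 0))) 2
      (by
        intro i j
        by_cases hij : i = j
        · subst hij; simp
        · simp only [hij, if_false]; split_ifs <;> norm_num)
    simp only [mul_neg, Finset.sum_neg_distrib] at this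
    linarith
  · have := B (fun i j => ((if 0 < ((X i ω).1 - (X j ω).1) * ((X i ω).2 - (X j ω).2) then (1 : ℝ) else 0)
      - (if ((X i ω).1 - (X j ω).1) * ((X i ω).2 - (X j ω).2) < 0 then (1 : ℝ) else 0))) 2
      (by
        intro i j
        by_cases hij : i = j
        · subst hij; simp
        · simp only [hij, if_false]; split_ifs <;> norm_num)
    linarith
  · have := B (fun i j => if (X i ω).1 < (X j ω).1 ∧ (X j ω).2 < (X i ω).2 then (1 : ℝ) else 0) 1
      (by intro i j; grind)
    linarith
  · have : 0 ≤ ∑ i : Fin n, ∑ j : Fin n, nwWeight p n K h Z i z ω * nwWeight p n K h Z j z ω *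
        (if (X i ω).1 < (X j ω).1 ∧ (X j ω).2 < (X i ω).2 then (1 : ℝ) else 0) :=
      Finset.sum_nonneg fun i _ => Finset.sum_nonneg fun j _ =>
        mul_nonneg (mul_nonneg (hw i) (hw j)) (by split_ifs <;> norm_num)
    linarith
end
end

section
/- (Berk's inequality for U-statistics.) Let m, n be positive integers with n ≥ m, X_1, …, X_n i.i.d. random vectors with values in a measurable space 𝒳, and g : 𝒳^m → [a, b] a symmetric real bounded measurable function. Set θ = E[g(X_1, …, X_m)] and σ² = Var[g(X_1, …, X_m)]. Then for any t > 0, P(binom(n,m)^{−1} Σ_c g(X_{i_1}, …, X_{i_m}) − θ ≥ t) ≤ exp(− ⌊n/m⌋ t² / (2σ² + (2/3)(b − θ) t)), where Σ_c denotes the sum over all subsets {i_1 < ⋯ < i_m} of m distinct integers in {1, …, n}. -/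
open MeasureTheory ProbabilityTheory Filter Real
open scoped ENNReal NNReal BigOperators Classical

noncomputable section


lemma berk_exp_aux {y : ℝ} (h0 : 0 ≤ y) (h3 : y < 3) :
    Real.exp y ≤ 1 + y + y ^ 2 / (2 * (1 - y / 3)) := by
  have hs : HasSum (fun n : ℕ => y ^ n / (n.factorial : ℝ)) (Real.exp y) := by
    rw [Real.exp_eq_exp_ℝ]
    exact NormedSpace.expSeries_div_hasSum_exp y
  have hs2 : HasSum (fun n : ℕ => y ^ (n + 2) / ((n + 2).factorial : ℝ)) (Real.exp y - (1 + y)) := by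
    have := (hasSum_nat_add_iff' 2).2 hs
    simpa [Finset.sum_range_succ] using this
  have hg : HasSum (fun n : ℕ => y ^ 2 / 2 * (y / 3) ^ n) (y ^ 2 / 2 * (1 - y / 3)⁻¹) :=
    (hasSum_geometric_of_lt_one (by positivity) (by linarith)).mul_left _
  have hf : ∀ n : ℕ, (2 * 3 ^ n : ℝ) ≤ ((n + 2).factorial : ℝ) := by
    intro n
    induction n with
    | zero => simp [Nat.factorial]
    | succ k ih =>
      have : ((k + 1 + 2).factorial : ℝ) = (k + 3) * ((k + 2).factorial : ℝ) := by
        rw [show k + 1 + 2 = (k + 2) + 1 by ring, Nat.factorial_succ]; push_cast; ring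
      rw [this, pow_succ]
      have hk : (0 : ℝ) ≤ k := Nat.cast_nonneg k
      have : (0 : ℝ) < ((k + 2).factorial : ℝ) := by positivity
      nlinarith
  have := hasSum_le (fun n => ?_) hs2 hg
  · have e : y ^ 2 / 2 * (1 - y / 3)⁻¹ = y ^ 2 / (2 * (1 - y / 3)) := by
      rw [div_mul_eq_div_div]; rfl
    linarith
  · have e : y ^ 2 / 2 * (y / 3) ^ n = y ^ (n + 2) / (2 * 3 ^ n) := by
      rw [div_pow, pow_add]; field_simp
    rw [e]
    exact div_le_div_of_nonneg_left (by positivity) (by positivity) (hf n)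

lemma berk_exp {y d : ℝ} (hy : y ≤ d) (hd0 : 0 ≤ d) (h3 : d < 3) :
    Real.exp y ≤ 1 + y + y ^ 2 / (2 * (1 - d / 3)) := by
  rcases le_total 0 y with h | h
  · refine (berk_exp_aux h (by linarith)).trans ?_
    have : y ^ 2 / (2 * (1 - y / 3)) ≤ y ^ 2 / (2 * (1 - d / 3)) :=
      div_le_div_of_nonneg_left (by positivity) (by linarith) (by linarith)
    linarith
  · have h1 := Real.quadratic_le_exp_of_nonneg (x := -y) (by linarith)
    have h2 : Real.exp y ≤ 1 + y + y ^ 2 / 2 := by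
      have hm : Real.exp y * Real.exp (-y) = 1 := by rw [← Real.exp_add]; simp
      have hp := Real.exp_pos y
      have hq : 0 < 1 + -y + (-y) ^ 2 / 2 := by nlinarith [sq_nonneg y]
      have h4 : Real.exp y * (1 + -y + (-y) ^ 2 / 2) ≤ 1 := by
        have := mul_le_mul_of_nonneg_left h1 hp.le
        linarith
      by_contra hc
      push Not at hc
      have h5 := mul_lt_mul_of_pos_right hc hq
      nlinarith [sq_nonneg (y ^ 2)]
    have : y ^ 2 / 2 ≤ y ^ 2 / (2 * (1 - d / 3)) :=
      div_le_div_of_nonneg_left (by positivity) (by linarith) (by linarith)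
    linarith

lemma berk_mgf {Ω : Type*} [MeasurableSpace Ω] (P : Measure Ω) [IsProbabilityMeasure P]
    (Y : Ω → ℝ) (hY : Measurable Y) (a b : ℝ) (hab : ∀ ω, Y ω ∈ Set.Icc a b)
    (l : ℝ) (hl : 0 ≤ l) (hl3 : l * (b - ∫ ω, Y ω ∂P) < 3) :
    ∫ ω, Real.exp (l * (Y ω - ∫ ω, Y ω ∂P)) ∂P ≤
      Real.exp (l ^ 2 * variance Y P / (2 * (1 - l * (b - ∫ ω, Y ω ∂P) / 3))) := by
  have hbd : ∀ᵐ ω ∂P, Y ω ∈ Set.Icc a b := ae_of_all _ hab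
  have hint : Integrable Y P := Integrable.of_mem_Icc a b hY.aemeasurable hbd
  have hLp : MemLp Y 2 P := memLp_of_bounded hbd hY.aestronglyMeasurable 2
  set θ := ∫ ω, Y ω ∂P with hθ
  have hθb : θ ≤ b := by
    have := integral_mono hint (integrable_const b) (fun ω => (hab ω).2)
    simpa using this
  set d := l * (b - θ) with hd
  have hd0 : 0 ≤ d := mul_nonneg hl (by linarith)
  have hvar : variance Y P = ∫ ω, (Y ω - θ) ^ 2 ∂P := by
    rw [variance_eq_integral hY.aemeasurable]
  have hi2 : Integrable (fun ω => (Y ω - θ) ^ 2) P := by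
    exact (hLp.sub (memLp_const θ)).integrable_sq
  have hi1 : Integrable (fun ω => Y ω - θ) P := hint.sub (integrable_const θ)
  have hi1' : Integrable (fun ω => 1 + l * (Y ω - θ)) P := (integrable_const 1).add (hi1.const_mul l)
  have hi2' : Integrable (fun ω => l ^ 2 / (2 * (1 - d / 3)) * (Y ω - θ) ^ 2) P := hi2.const_mul _
  have hle : ∫ ω, Real.exp (l * (Y ω - θ)) ∂P ≤
      ∫ ω, (1 + l * (Y ω - θ)) + l ^ 2 / (2 * (1 - d / 3)) * (Y ω - θ) ^ 2 ∂P := by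
    refine integral_mono_of_nonneg (ae_of_all _ fun ω => (Real.exp_pos _).le)
      (hi1'.add hi2') (ae_of_all _ fun ω => ?_)
    have := berk_exp (y := l * (Y ω - θ)) (d := d)
      (mul_le_mul_of_nonneg_left (by linarith [(hab ω).2]) hl) hd0 hl3
    refine this.trans (le_of_eq ?_)
    simp only [mul_pow]
    ring
  refine hle.trans ?_
  rw [integral_add hi1' hi2', integral_add (integrable_const 1) (hi1.const_mul l),
    integral_const_mul, integral_const_mul, integral_sub hint (integrable_const θ), ← hvar, ← hθ]
  simp only [integral_const, probReal_univ, smul_eq_mul, one_mul, mul_one, sub_self, mul_zero, add_zero]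
  rw [div_mul_eq_mul_div]
  linarith [Real.add_one_le_exp (l ^ 2 * variance Y P / (2 * (1 - d / 3)))]

/-- averaging over permutations -/
lemma berk_perm {m n : ℕ} (F : (Fin m → Fin n) → ℝ)
    (hF : ∀ (σ : Equiv.Perm (Fin m)) (x : Fin m → Fin n), F (x ∘ σ) = F x)
    (e : Fin m → Fin n) (he : Function.Injective e) :
    (n.choose m : ℝ) * ∑ ρ : Equiv.Perm (Fin n), F (ρ ∘ e) =
      (n.factorial : ℝ) * ∑ ι ∈ Finset.univ.filter (fun ι : Fin m → Fin n => StrictMono ι), F ι := by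
  let G : Finset (Fin n) → ℝ := fun s => if h : s.card = m then F (s.orderEmbOfFin h) else 0
  have hG : ∀ x : Fin m → Fin n, Function.Injective x → F x = G (Finset.univ.image x) := by
    intro x hx
    have hc : (Finset.univ.image x).card = m := by
      rw [Finset.card_image_of_injective _ hx]; simp
    simp only [G, dif_pos hc]
    set y := (Finset.univ.image x).orderEmbOfFin hc with hy
    have hr : ∀ i, ∃ j, y j = x i := by
      intro i
      have : x i ∈ Set.range y := by
        rw [hy, Finset.range_orderEmbOfFin]; simp
      exact this
    choose σ hσ using hr
    have hσi : Function.Injective σ := by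
      intro i j hij
      apply hx
      rw [← hσ, ← hσ, hij]
    have := hF (Equiv.ofBijective σ (Finite.injective_iff_bijective.1 hσi)) y
    rw [← this]
    congr 1
    funext i
    simp [hσ]
  have hS : ∑ ι ∈ Finset.univ.filter (fun ι : Fin m → Fin n => StrictMono ι), F ι =
      ∑ s ∈ Finset.powersetCard m (Finset.univ : Finset (Fin n)), G s := by
    refine Finset.sum_bij (fun ι _ => Finset.univ.image ι) ?_ ?_ ?_ ?_
    · intro ι hι
      have hι : StrictMono ι := by simpa using hι
      rw [Finset.mem_powersetCard]
      exact ⟨Finset.subset_univ _, by rw [Finset.card_image_of_injective _ hι.injective]; simp⟩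
    · intro ι hι κ hκ h
      have hι : StrictMono ι := by simpa using hι
      have hκ : StrictMono κ := by simpa using hκ
      have h' := congrArg (fun s : Finset (Fin n) => (s : Set (Fin n))) h
      simp only [Finset.coe_image, Finset.coe_univ, Set.image_univ] at h'
      exact (StrictMono.range_inj hι hκ).1 h'
    · intro s hs
      have hc := (Finset.mem_powersetCard.1 hs).2
      refine ⟨s.orderEmbOfFin hc, by simpa using (s.orderEmbOfFin hc).strictMono, ?_⟩
      apply Finset.coe_injective
      simp
    · intro ι hι
      have hι : StrictMono ι := by simpa using hι
      exact hG ι hι.injective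
  have hcard : (Finset.univ.filter (fun ι : Fin m → Fin n => StrictMono ι)).card = n.choose m := by
    have : (Finset.univ.filter (fun ι : Fin m → Fin n => StrictMono ι)).card =
      (Finset.powersetCard m (Finset.univ : Finset (Fin n))).card := by
      refine Finset.card_bij (fun ι _ => Finset.univ.image ι) ?_ ?_ ?_
      · intro ι hι
        have hι : StrictMono ι := by simpa using hι
        rw [Finset.mem_powersetCard]
        exact ⟨Finset.subset_univ _, by rw [Finset.card_image_of_injective _ hι.injective]; simp⟩
      · intro ι hι κ hκ h
        have hι : StrictMono ι := by simpa using hι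
        have hκ : StrictMono κ := by simpa using hκ
        have h' := congrArg (fun s : Finset (Fin n) => (s : Set (Fin n))) h
        simp only [Finset.coe_image, Finset.coe_univ, Set.image_univ] at h'
        exact (StrictMono.range_inj hι hκ).1 h'
      · intro s hs
        have hc := (Finset.mem_powersetCard.1 hs).2
        refine ⟨s.orderEmbOfFin hc, by simpa using (s.orderEmbOfFin hc).strictMono, ?_⟩
        apply Finset.coe_injective
        simp
    rw [this]; simp
  -- inner sum over ρ does not depend on the injection
  have h1 : ∀ ι : Fin m → Fin n, Function.Injective ι →
      ∑ ρ : Equiv.Perm (Fin n), F (ρ ∘ ι) = ∑ ρ : Equiv.Perm (Fin n), F (ρ ∘ e) := by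
    intro ι hι
    let f0 := (Equiv.ofInjective e he).symm.trans (Equiv.ofInjective ι hι)
    let τ : Equiv.Perm (Fin n) := Equiv.extendSubtype (p := (· ∈ Set.range e)) (q := (· ∈ Set.range ι)) f0
    have hτ : ∀ i, τ (e i) = ι i := by
      intro i
      have := Equiv.extendSubtype_apply_of_mem (p := (· ∈ Set.range e)) (q := (· ∈ Set.range ι)) f0 (e i) ⟨i, rfl⟩
      simp only [τ]
      rw [this]
      have h2 : (⟨e i, ⟨i, rfl⟩⟩ : Set.range e) = Equiv.ofInjective e he i := rfl
      simp only [f0, Equiv.trans_apply]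
      erw [h2, Equiv.symm_apply_apply]
      rfl
    rw [← Equiv.sum_comp (Equiv.mulRight τ) (fun ρ : Equiv.Perm (Fin n) => F (ρ ∘ e))]
    refine Finset.sum_congr rfl fun ρ _ => ?_
    congr 1
    funext i
    simp [hτ]
  have h2 : ∀ ρ : Equiv.Perm (Fin n),
      ∑ ι ∈ Finset.univ.filter (fun ι : Fin m → Fin n => StrictMono ι), F (ρ ∘ ι) =
      ∑ ι ∈ Finset.univ.filter (fun ι : Fin m → Fin n => StrictMono ι), F ι := by
    intro ρ
    rw [hS]
    refine Finset.sum_bij (fun ι _ => Finset.univ.image (ρ ∘ ι)) ?_ ?_ ?_ ?_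
    · intro ι hι
      have hι : StrictMono ι := by simpa using hι
      rw [Finset.mem_powersetCard]
      exact ⟨Finset.subset_univ _, by
        rw [Finset.card_image_of_injective _ (ρ.injective.comp hι.injective)]; simp⟩
    · intro ι hι κ hκ h
      have hι : StrictMono ι := by simpa using hι
      have hκ : StrictMono κ := by simpa using hκ
      have h' := congrArg (fun s : Finset (Fin n) => (s : Set (Fin n))) h
      simp only [Finset.coe_image, Finset.coe_univ, Set.image_univ, Set.range_comp] at h'
      exact (StrictMono.range_inj hι hκ).1 (ρ.injective.image_injective h')
    · intro s hs
      have hc := (Finset.mem_powersetCard.1 hs).2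
      have hc' : (s.image ρ.symm).card = m := by
        rw [Finset.card_image_of_injective _ ρ.symm.injective, hc]
      refine ⟨(s.image ρ.symm).orderEmbOfFin hc',
        by simpa using ((s.image ρ.symm).orderEmbOfFin hc').strictMono, ?_⟩
      apply Finset.coe_injective
      simp only [Finset.coe_image, Finset.coe_univ, Set.image_univ, Set.range_comp,
        Finset.range_orderEmbOfFin]
      rw [← Set.image_comp]; simp
    · intro ι hι
      have hι : StrictMono ι := by simpa using hι
      exact hG _ (ρ.injective.comp hι.injective)
  have h3 : ∑ ι ∈ Finset.univ.filter (fun ι : Fin m → Fin n => StrictMono ι),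
      ∑ ρ : Equiv.Perm (Fin n), F (ρ ∘ ι) =
      (n.choose m : ℝ) * ∑ ρ : Equiv.Perm (Fin n), F (ρ ∘ e) := by
    rw [Finset.sum_congr rfl (fun ι hι => h1 ι (by
      have hι : StrictMono ι := by simpa using hι
      exact hι.injective)), Finset.sum_const, hcard, nsmul_eq_mul]
  rw [← h3, Finset.sum_comm, Finset.sum_congr rfl (fun ρ _ => h2 ρ), Finset.sum_const,
    Finset.card_univ, Fintype.card_perm, Fintype.card_fin, nsmul_eq_mul]

lemma berk_law {Ω : Type*} [MeasurableSpace Ω] (P : Measure Ω) [IsProbabilityMeasure P]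
    {𝒳 : Type*} [MeasurableSpace 𝒳] {m : ℕ}
    (X : ℕ → Ω → 𝒳) (hXmeas : ∀ i, Measurable (X i))
    (hindep : iIndepFun X P)
    (hident : ∀ i, Measure.map (X i) P = Measure.map (X 0) P)
    (e : Fin m → ℕ) (he : Function.Injective e) :
    Measure.map (fun ω i => X (e i) ω) P = Measure.pi (fun _ : Fin m => Measure.map (X 0) P) := by
  rw [iIndepFun.map_fun_eq_pi_map (fun i => (hXmeas (e i)).aemeasurable) (hindep.precomp he)]
  simp_rw [hident]

lemma berk_block {Ω : Type*} [MeasurableSpace Ω] (P : Measure Ω) [IsProbabilityMeasure P]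
    {𝒳 : Type*} [MeasurableSpace 𝒳] {m k : ℕ}
    (X : ℕ → Ω → 𝒳) (hXmeas : ∀ i, Measurable (X i))
    (hindep : iIndepFun X P)
    (e : Fin k × Fin m → ℕ) (he : Function.Injective e) :
    iIndepFun (fun (j : Fin k) ω (i : Fin m) => X (e (j, i)) ω) P := by
  have h1 := hindep.precomp he
  have h2 : ∀ j, iIndepFun (fun i : Fin m => X (e (j, i))) P := fun j =>
    hindep.precomp (g := fun i : Fin m => e (j, i)) (fun a b h => by simpa using he h)
  have : ∀ j i, IsProbabilityMeasure (P.map (X (e (j, i)))) :=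
    fun i j ↦ Measure.isProbabilityMeasure_map (hXmeas _).aemeasurable
  have : ∀ i, IsProbabilityMeasure (P.map (X i)) :=
    fun i ↦ Measure.isProbabilityMeasure_map (hXmeas _).aemeasurable
  have h3 : (MeasurableEquiv.curry (Fin k) (Fin m) 𝒳) ∘ (fun ω p ↦ X (e p) ω) =
      fun ω j i ↦ X (e (j, i)) ω := by
    ext; simp
  rw [iIndepFun_iff_map_fun_eq_infinitePi_map (by fun_prop), ← h3,
    ← Measure.map_map (by fun_prop) (by fun_prop),
    (iIndepFun_iff_map_fun_eq_infinitePi_map (by fun_prop)).1 h1,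
    Measure.infinitePi_map_curry (fun j i ↦ P.map (X (e (j, i))))]
  congr 1
  funext j
  rw [(iIndepFun_iff_map_fun_eq_infinitePi_map (by fun_prop)).1 (h2 j)]

lemma berk_opt {v c t : ℝ} (hv : 0 ≤ v) (hc : 0 ≤ c) (ht : 0 < t) (hD : 0 < 2 * v + (2 / 3) * c * t) :
    ∃ l : ℝ, 0 ≤ l ∧ l * c < 3 ∧
      -l * t + l ^ 2 * v / (2 * (1 - l * c / 3)) ≤ - t ^ 2 / (2 * v + (2 / 3) * c * t) := by
  rcases hv.eq_or_lt with h | h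
  · subst h
    have hc' : 0 < c := by
      rcases hc.eq_or_lt with h | h
      · subst h; simp at hD
      · exact h
    refine ⟨3 / (2 * c), by positivity, ?_, le_of_eq ?_⟩
    · field_simp; norm_num
    · field_simp; ring
  · have hs : 0 < v + c * t / 3 := by positivity
    refine ⟨t / (v + c * t / 3), by positivity, ?_, le_of_eq ?_⟩
    · rw [div_mul_eq_mul_div, div_lt_iff₀ hs]; nlinarith
    · have e : 1 - t / (v + c * t / 3) * c / 3 = v / (v + c * t / 3) := by
        field_simp; ring
      rw [e]
      field_simp
      ring

lemma berk_sum_mgf {Ω : Type*} [MeasurableSpace Ω] (P : Measure Ω) [IsProbabilityMeasure P]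
    {𝒳 : Type*} [MeasurableSpace 𝒳] {m k : ℕ}
    (X : ℕ → Ω → 𝒳) (hXmeas : ∀ i, Measurable (X i))
    (hindep : iIndepFun X P)
    (hident : ∀ i, Measure.map (X i) P = Measure.map (X 0) P)
    (f : (Fin m → 𝒳) → ℝ) (hf : Measurable f)
    (e : Fin k × Fin m → ℕ) (he : Function.Injective e) (l : ℝ) :
    ∫ ω, Real.exp (l * ∑ j : Fin k, f (fun i => X (e (j, i)) ω)) ∂P =
      (∫ ω, Real.exp (l * f (fun i => X (i : ℕ) ω)) ∂P) ^ k := by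
  have hb := (berk_block P X hXmeas hindep e he).comp (fun _ => f) (fun _ => hf)
  have hXe : ∀ e' : Fin m → ℕ, Measurable (fun ω i => X (e' i) ω) := fun e' => by fun_prop
  have h1 := hb.mgf_sum (t := l) (fun j => hf.comp (hXe _)) Finset.univ
  have h2 : ∀ e' : Fin m → ℕ, Function.Injective e' →
      ∫ ω, Real.exp (l * f (fun i => X (e' i) ω)) ∂P =
      ∫ x, Real.exp (l * f x) ∂(Measure.pi (fun _ : Fin m => Measure.map (X 0) P)) := by
    intro e' he'
    rw [← berk_law P X hXmeas hindep hident e' he', integral_map (hXe e').aemeasurable]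
    exact (by fun_prop : Measurable fun x => Real.exp (l * f x)).aestronglyMeasurable
  simp only [mgf, Finset.sum_apply, Function.comp_apply] at h1
  rw [h1, Finset.prod_congr rfl (fun j _ => h2 (fun i => e (j, i))
    (fun a b h => by simpa using he h)), h2 (fun i => (i : ℕ)) Fin.val_injective]
  simp

/-- Berk's inequality for U-statistics, Lemma 8 of the paper. -/
theorem berk_inequality
    {Ω : Type*} [MeasurableSpace Ω] (P : Measure Ω) [IsProbabilityMeasure P]
    {𝒳 : Type*} [MeasurableSpace 𝒳]
    (m n : ℕ) (hm : 0 < m) (hn : 0 < n) (hmn : m ≤ n)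
    (X : ℕ → Ω → 𝒳) (hXmeas : ∀ i, Measurable (X i))
    -- the `X_i` are i.i.d.
    (hindep : iIndepFun X P)
    (hident : ∀ i, Measure.map (X i) P = Measure.map (X 0) P)
    (g : (Fin m → 𝒳) → ℝ) (hgmeas : Measurable g)
    (a b : ℝ) (hab : ∀ x, g x ∈ Set.Icc a b)
    -- `g` is symmetric
    (hgsymm : ∀ (σ : Equiv.Perm (Fin m)) (x : Fin m → 𝒳), g (x ∘ σ) = g x) :
    ∀ t : ℝ, 0 < t →
      P {ω | (∫ ω', g (fun k => X (k : ℕ) ω') ∂P) + t ≤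
          ((n.choose m : ℕ) : ℝ)⁻¹ *
            ∑ ι ∈ Finset.univ.filter (fun ι : Fin m → Fin n => StrictMono ι),
              g (fun k => X ((ι k : Fin n) : ℕ) ω)}
        ≤ ENNReal.ofReal (Real.exp (- (((n / m : ℕ) : ℝ) * t ^ 2) /
            (2 * variance (fun ω' => g (fun k => X (k : ℕ) ω')) P
              + (2 / 3) * (b - ∫ ω', g (fun k => X (k : ℕ) ω') ∂P) * t))) := by
  intro t ht
  set Y : Ω → ℝ := fun ω' => g (fun k => X (k : ℕ) ω') with hYdef
  set θ : ℝ := ∫ ω', Y ω' ∂P with hθ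
  have hYm : Measurable Y := hgmeas.comp (by fun_prop)
  have hYab : ∀ ω, Y ω ∈ Set.Icc a b := fun ω => hab _
  have hint : Integrable Y P := Integrable.of_mem_Icc a b hYm.aemeasurable (ae_of_all _ hYab)
  have hθb : θ ≤ b := by
    have := integral_mono hint (integrable_const b) (fun ω => (hYab ω).2)
    simpa using this
  have hv : 0 ≤ variance Y P := variance_nonneg _ _
  have hc : 0 ≤ b - θ := by linarith
  have hD0 : 0 ≤ 2 * variance Y P + (2 / 3) * (b - θ) * t := by positivity
  rcases hD0.eq_or_lt with hD | hD
  · rw [← hD]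
    simp only [div_zero, Real.exp_zero, ENNReal.ofReal_one]
    exact prob_le_one
  obtain ⟨l, hl0, hl3, hl⟩ := berk_opt hv hc ht hD
  set k : ℕ := n / m with hk
  have hk1 : 0 < k := Nat.div_pos hmn hm
  have hkm : k * m ≤ n := Nat.div_mul_le_self n m
  have hkR : (0 : ℝ) < k := by exact_mod_cast hk1
  let ε : Fin k × Fin m → Fin n := fun p => Fin.castLE hkm (finProdFinEquiv p)
  have hε : Function.Injective ε := (Fin.castLE_injective hkm).comp finProdFinEquiv.injective
  set U : Ω → ℝ := fun ω => ((n.choose m : ℕ) : ℝ)⁻¹ *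
            ∑ ι ∈ Finset.univ.filter (fun ι : Fin m → Fin n => StrictMono ι),
              g (fun k => X ((ι k : Fin n) : ℕ) ω) with hU
  have hUm : Measurable U := by
    refine Measurable.const_mul (Finset.measurable_sum _ fun ι _ => hgmeas.comp ?_) _
    fun_prop
  let S : Equiv.Perm (Fin n) → Ω → ℝ := fun ρ ω =>
    ∑ j : Fin k, (g (fun i => X ((ρ (ε (j, i)) : Fin n) : ℕ) ω) - θ)
  have hSm : ∀ ρ, Measurable (S ρ) := by
    intro ρ
    refine Finset.measurable_sum _ fun j _ => (hgmeas.comp ?_).sub_const _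
    fun_prop
  have hSb : ∀ ρ ω, S ρ ω ≤ k * (b - θ) := by
    intro ρ ω
    have := Finset.sum_le_card_nsmul (Finset.univ : Finset (Fin k))
      (fun j => g (fun i => X ((ρ (ε (j, i)) : Fin n) : ℕ) ω) - θ) (b - θ)
      (fun j _ => by linarith [(hab (fun i => X ((ρ (ε (j, i)) : Fin n) : ℕ) ω)).2])
    rwa [Finset.card_univ, Fintype.card_fin, nsmul_eq_mul] at this
  have hfac : (0 : ℝ) < n.factorial := by positivity
  have hch : (0 : ℝ) < n.choose m := by exact_mod_cast Nat.choose_pos hmn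
  have hkU : ∀ ω, k * (U ω - θ) = ∑ ρ : Equiv.Perm (Fin n), (n.factorial : ℝ)⁻¹ * S ρ ω := by
    intro ω
    have key : ∀ j : Fin k, ∑ ρ : Equiv.Perm (Fin n), g (fun i => X ((ρ (ε (j, i)) : Fin n) : ℕ) ω)
        = n.factorial * U ω := by
      intro j
      have := berk_perm (fun ι : Fin m → Fin n => g (fun i => X ((ι i : Fin n) : ℕ) ω))
        (fun σ x => hgsymm σ (fun i => X ((x i : Fin n) : ℕ) ω)) (fun i => ε (j, i))
        (fun a b h => by simpa using hε h)
      simp only [Function.comp_apply] at this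
      simp only [hU]
      rw [mul_left_comm, ← this, inv_mul_cancel_left₀ hch.ne']
    rw [← Finset.mul_sum]
    simp only [S]
    rw [Finset.sum_comm]
    simp only [Finset.sum_sub_distrib, key, Finset.sum_const, Finset.card_univ, Fintype.card_perm,
      Fintype.card_fin, nsmul_eq_mul]
    field_simp
  have hSint : ∀ ρ, Integrable (fun ω => Real.exp (l * S ρ ω)) P := by
    intro ρ
    refine Integrable.of_mem_Icc 0 (Real.exp (l * (k * (b - θ))))
      (((hSm ρ).const_mul l).exp).aemeasurable (ae_of_all _ fun ω => ⟨(Real.exp_pos _).le, ?_⟩)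
    exact Real.exp_le_exp.2 (mul_le_mul_of_nonneg_left (hSb ρ ω) hl0)
  set B : ℝ := l ^ 2 * variance Y P / (2 * (1 - l * (b - θ) / 3)) with hB
  have hSexp : ∀ ρ, ∫ ω, Real.exp (l * S ρ ω) ∂P ≤ Real.exp (k * B) := by
    intro ρ
    have h1 := berk_sum_mgf P X hXmeas hindep hident (fun x => g x - θ) (hgmeas.sub_const θ)
      (fun p => ((ρ (ε p) : Fin n) : ℕ)) (Fin.val_injective.comp (ρ.injective.comp hε)) l
    rw [h1, Real.exp_nat_mul]
    exact pow_le_pow_left₀ (integral_nonneg fun ω => (Real.exp_pos _).le)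
      (berk_mgf P Y hYm a b hYab l hl0 hl3) k
  have hJ : ∀ ω, Real.exp (l * (k * (U ω - θ))) ≤
      ∑ ρ : Equiv.Perm (Fin n), (n.factorial : ℝ)⁻¹ * Real.exp (l * S ρ ω) := by
    intro ω
    have := convexOn_exp.map_sum_le (t := (Finset.univ : Finset (Equiv.Perm (Fin n))))
      (w := fun _ => (n.factorial : ℝ)⁻¹) (p := fun ρ => l * S ρ ω)
      (fun _ _ => by positivity)
      (by simp [Fintype.card_perm, hfac.ne']) (fun _ _ => Set.mem_univ _)
    simp only [smul_eq_mul] at this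
    rw [hkU, Finset.mul_sum]
    simpa only [mul_left_comm l] using this
  have hJint : Integrable (fun ω => ∑ ρ : Equiv.Perm (Fin n),
      (n.factorial : ℝ)⁻¹ * Real.exp (l * S ρ ω)) P :=
    integrable_finset_sum _ fun ρ _ => (hSint ρ).const_mul _
  have hVint : Integrable (fun ω => Real.exp (l * (k * (U ω - θ)))) P := by
    refine hJint.mono' (by fun_prop) (ae_of_all _ fun ω => ?_)
    rw [Real.norm_eq_abs, abs_of_pos (Real.exp_pos _)]
    exact hJ ω
  have hE : ∫ ω, Real.exp (l * (k * (U ω - θ))) ∂P ≤ Real.exp (k * B) := by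
    refine (integral_mono hVint hJint hJ).trans ?_
    rw [integral_finset_sum _ fun ρ _ => (hSint ρ).const_mul _]
    simp only [integral_const_mul]
    refine (Finset.sum_le_sum fun ρ _ => mul_le_mul_of_nonneg_left (hSexp ρ)
      (inv_nonneg.2 hfac.le)).trans (le_of_eq ?_)
    simp [Fintype.card_perm, hfac.ne']
  have hM := measure_ge_le_exp_mul_mgf (μ := P) (X := fun ω => k * (U ω - θ)) (t := l) (k * t) hl0 hVint
  have hset : {ω | θ + t ≤ U ω} = {ω | (k : ℝ) * t ≤ k * (U ω - θ)} := by
    ext ω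
    simp only [Set.mem_setOf_eq, mul_le_mul_iff_right₀ hkR]
    constructor <;> intro h <;> linarith
  change P {ω | θ + t ≤ U ω} ≤ _
  rw [hset, ← ofReal_measureReal]
  refine ENNReal.ofReal_le_ofReal (hM.trans ?_)
  refine (mul_le_mul_of_nonneg_left hE (Real.exp_pos _).le).trans ?_
  rw [← Real.exp_add]
  refine Real.exp_le_exp.2 ?_
  have := mul_le_mul_of_nonneg_left hl hkR.le
  calc -l * (k * t) + k * B = k * (-l * t + B) := by ring
    _ ≤ _ := this
    _ = _ := by ring
end
end
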